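/- arXiv:2503.22286 — 4 statements merged into one kernel-verified Lean document; each statement's English description precedes it below -/
import Mathlib

section
/- Let 1 ≤ r < n, let Q be an invertible n×n real matrix, let Ẽ be an n×n real symmetric matrix with I + Ẽ positive definite, and set A = Q·(I+Ẽ)·Qᵀ. Let V be a real n×r matrix with Vᵀ·V = I_r, let D be a real r×r diagonal matrix with Ẽ·V = V·D, and for α > 0 define P_α = Q·( α·(I − V·Vᵀ) + V·(I_r + D)·Vᵀ )·Qᵀ. Set α* = trace( (I+Ẽ)·(I − V·Vᵀ) ) / (n − r). Then D_LD(A, P_{α*}) = ln K(P_{α*}⁻¹·A) = −ln det(P_{α*}⁻¹·A) = −ln det(P_1⁻¹·A) + (n − r)·ln(α*). -/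
open Matrix

/-- Bregman log determinant divergence. -/
noncomputable def DLD {n : ℕ} (A P : Matrix (Fin n) (Fin n) ℝ) : ℝ :=
  (A * P⁻¹).trace - Real.log (A * P⁻¹).det - n

/-- Kaporin's condition number. -/
noncomputable def Kap {n : ℕ} (M : Matrix (Fin n) (Fin n) ℝ) : ℝ :=
  (M.trace / n) ^ n / M.det

/-!
Up to conjugation by `Qᵀ`, the preconditioned matrix `P_α⁻¹ * A` is the identity on the range of
`V`, because `1 + E` acts there as `1 + D`, and it contributes `r` to the trace. The complement
contributes `trace ((1 + E) * (1 - V * Vᵀ)) / α`, and `α*` is the scaling that makes this `n - r`.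
Hence `trace (P⁻¹ * A) = n` at `α*`, and both the divergence and `log K` collapse to
`-log det (P⁻¹ * A)`. Since `α` scales a complement of dimension `n - r`, the determinant of `P_α`
is `α ^ (n - r)` times that of `P_1`.
-/

section Projection

variable {m k R : Type*} [Fintype m] [Fintype k] [DecidableEq k] [CommRing R]

theorem isIdempotentElem_mul_of_mul_eq_one {V : Matrix m k R} {U : Matrix k m R} (h : U * V = 1) :
    IsIdempotentElem (V * U) := by
  rw [IsIdempotentElem, Matrix.mul_assoc, ← Matrix.mul_assoc U, h, Matrix.one_mul]

theorem trace_mul_of_mul_eq_one {V : Matrix m k R} {U : Matrix k m R} (h : U * V = 1) :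
    (V * U).trace = Fintype.card k := by
  rw [trace_mul_comm, h, trace_one]

theorem isStarProjection_one_sub_mul_conjTranspose [DecidableEq m] [StarRing R]
    {V : Matrix m k R} (h : Vᴴ * V = 1) : IsStarProjection (1 - V * Vᴴ) :=
  IsStarProjection.one_sub
    ⟨isIdempotentElem_mul_of_mul_eq_one h, isHermitian_mul_conjTranspose_self V⟩

theorem isUnit_det_of_mul_eq_mul [DecidableEq m] {V : Matrix m k R} {U : Matrix k m R}
    {B : Matrix m m R} {W : Matrix k k R} (hUV : U * V = 1) (hB : IsUnit B.det)
    (hBV : B * V = V * W) : IsUnit W.det := by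
  refine isUnit_det_of_left_inverse (B := U * B⁻¹ * V) ?_
  rw [Matrix.mul_assoc, ← hBV, Matrix.mul_assoc, nonsing_inv_mul_cancel_left B V hB, hUV]

end Projection

section PosDef

variable {m R : Type*} [Fintype m] [CommRing R] [PartialOrder R] [StarRing R]
  [IsOrderedCancelAddMonoid R]

theorem trace_conjTranspose_mul_mul_pos {k : Type*} [Fintype k] {B : Matrix m m R} (hB : B.PosDef)
    {C : Matrix m k R} (hC : C ≠ 0) : 0 < (Cᴴ * B * C).trace := by
  obtain ⟨j, hj⟩ : ∃ j, Cᵀ j ≠ 0 := by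
    contrapose! hC
    exact transpose_eq_zero.mp (funext hC)
  have diag_eq (i : k) : (Cᴴ * B * C) i i = star (Cᵀ i) ⬝ᵥ (B *ᵥ Cᵀ i) := by
    rw [Matrix.mul_assoc]
    rfl
  refine Finset.sum_pos' (fun i _ ↦ ?_) ⟨j, Finset.mem_univ j, ?_⟩
  · rw [diag_apply, diag_eq]
    exact hB.posSemidef.dotProduct_mulVec_nonneg _
  · rw [diag_apply, diag_eq]
    exact hB.dotProduct_mulVec_pos hj

theorem trace_mul_pos_of_isStarProjection {B S : Matrix m m R} (hB : B.PosDef)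
    (hS : IsStarProjection S) (hS₀ : S ≠ 0) : 0 < (B * S).trace := by
  have trace_eq : (B * S).trace = (Sᴴ * B * S).trace := by
    rw [← star_eq_conjTranspose, hS.isSelfAdjoint.star_eq, trace_mul_cycle,
      hS.isIdempotentElem.eq, trace_mul_comm]
  exact trace_eq ▸ trace_conjTranspose_mul_mul_pos hB hS₀

theorem trace_mul_one_sub_mul_conjTranspose_pos {k : Type*} [Fintype k] [DecidableEq m]
    [DecidableEq k] [CharZero R] (hkm : Fintype.card k < Fintype.card m) {B : Matrix m m R}
    (hB : B.PosDef) {V : Matrix m k R} (hV : Vᴴ * V = 1) : 0 < (B * (1 - V * Vᴴ)).trace := by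
  refine trace_mul_pos_of_isStarProjection hB (isStarProjection_one_sub_mul_conjTranspose hV) ?_
  intro h
  have card_eq : (Fintype.card m : R) = Fintype.card k := by
    rw [← trace_mul_of_mul_eq_one hV, ← sub_eq_zero.mp h, trace_one]
  exact hkm.ne' (Nat.cast_injective card_eq)

end PosDef

/-- The matrix acting as `α` on the kernel of `U` and as `W` on the range of `V`, in the
coordinates given by `V`, when `U * V = 1`. The preconditioner `P_α` is
`Q * deflation V Vᵀ α (1 + D) * Qᵀ`. Allowing any left inverse `U` of `V` in place of `Vᵀ`
covers oblique projections `V * U` as well. -/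
def deflation {m k R : Type*} [Fintype k] [DecidableEq m] [CommRing R] (V : Matrix m k R)
    (U : Matrix k m R) (α : R) (W : Matrix k k R) : Matrix m m R :=
  α • (1 - V * U) + V * W * U

section Deflation

variable {m k : Type*} [Fintype k] [DecidableEq m] [DecidableEq k]

theorem deflation_one_one {R : Type*} [CommRing R] (V : Matrix m k R) (U : Matrix k m R) :
    deflation V U 1 1 = 1 := by
  simp [deflation]

variable [Fintype m]

theorem deflation_mul_deflation {R : Type*} [CommRing R] {V : Matrix m k R} {U : Matrix k m R}
    (hUV : U * V = 1) (α β : R) (W X : Matrix k k R) :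
    deflation V U α W * deflation V U β X = deflation V U (α * β) (W * X) := by
  have one_sub_mul : (1 - V * U) * V = 0 := by
    rw [Matrix.sub_mul, Matrix.mul_assoc, hUV, Matrix.one_mul, Matrix.mul_one, sub_self]
  have mul_one_sub : U * (1 - V * U) = 0 := by
    rw [Matrix.mul_sub, ← Matrix.mul_assoc, hUV, Matrix.one_mul, Matrix.mul_one, sub_self]
  have compl_sq := (isIdempotentElem_mul_of_mul_eq_one hUV).one_sub.eq
  have compl_mul_range : (1 - V * U) * (V * X * U) = 0 := by
    simp only [← Matrix.mul_assoc, one_sub_mul, Matrix.zero_mul]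
  have range_mul_compl : V * W * U * (1 - V * U) = 0 := by
    rw [Matrix.mul_assoc, mul_one_sub, Matrix.mul_zero]
  have range_mul_range : V * W * U * (V * X * U) = V * (W * X) * U := by
    calc V * W * U * (V * X * U) = V * W * (U * V) * X * U := by simp only [Matrix.mul_assoc]
      _ = V * (W * X) * U := by rw [hUV, Matrix.mul_one, Matrix.mul_assoc V]
  simp only [deflation, Matrix.add_mul, Matrix.mul_add, Matrix.smul_mul, Matrix.mul_smul, compl_sq,
    compl_mul_range, range_mul_compl, range_mul_range, smul_smul, smul_zero, add_zero, zero_add,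
    mul_comm β]

variable {K : Type*} [Field K] {V : Matrix m k K} {U : Matrix k m K} {α : K} {W : Matrix k k K}

theorem inv_deflation (hUV : U * V = 1) (hα : α ≠ 0) (hW : IsUnit W.det) :
    (deflation V U α W)⁻¹ = deflation V U α⁻¹ W⁻¹ := by
  refine inv_eq_right_inv ?_
  rw [deflation_mul_deflation hUV, mul_inv_cancel₀ hα, mul_nonsing_inv W hW, deflation_one_one]

theorem det_deflation (hUV : U * V = 1) (hα : α ≠ 0) :
    (deflation V U α W).det = α ^ (Fintype.card m - Fintype.card k : ℤ) * W.det := by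
  have deflation_eq : deflation V U α W = α • (1 + V * ((α⁻¹ • W - 1) * U)) := by
    simp only [deflation, Matrix.sub_mul, Matrix.mul_sub, Matrix.smul_mul, Matrix.mul_smul,
      smul_add, smul_sub, smul_smul, mul_inv_cancel₀ hα, one_smul, Matrix.one_mul,
      Matrix.mul_assoc]
    abel
  calc (deflation V U α W).det
      = α ^ Fintype.card m * (1 + (α⁻¹ • W - 1) * U * V).det := by
        rw [deflation_eq, det_smul, det_one_add_mul_comm]
    _ = α ^ Fintype.card m * (α⁻¹ ^ Fintype.card k * W.det) := by
        rw [Matrix.mul_assoc, hUV, Matrix.mul_one, add_sub_cancel, det_smul]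
    _ = α ^ (Fintype.card m - Fintype.card k : ℤ) * W.det := by
        rw [zpow_sub₀ hα, zpow_natCast, zpow_natCast, inv_pow, div_eq_mul_inv, mul_assoc]

variable {B : Matrix m m K}

theorem mul_inv_deflation (hUV : U * V = 1) (hα : α ≠ 0) (hW : IsUnit W.det)
    (hBV : B * V = V * W) :
    B * (deflation V U α W)⁻¹ = α⁻¹ • (B * (1 - V * U)) + V * U := by
  rw [inv_deflation hUV hα hW, deflation, Matrix.mul_add, Matrix.mul_smul, ← Matrix.mul_assoc,
    ← Matrix.mul_assoc, hBV, mul_nonsing_inv_cancel_right W V hW]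

theorem trace_mul_inv_deflation (hUV : U * V = 1) (hα : α ≠ 0) (hW : IsUnit W.det)
    (hBV : B * V = V * W) :
    (B * (deflation V U α W)⁻¹).trace = α⁻¹ * (B * (1 - V * U)).trace + Fintype.card k := by
  rw [mul_inv_deflation hUV hα hW hBV, trace_add, trace_smul, smul_eq_mul,
    trace_mul_of_mul_eq_one hUV]

theorem det_mul_inv_deflation (hUV : U * V = 1) (hα : α ≠ 0) :
    (B * (deflation V U α W)⁻¹).det =
      (B * (deflation V U 1 W)⁻¹).det / α ^ (Fintype.card m - Fintype.card k : ℤ) := by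
  simp only [det_mul, det_nonsing_inv, Ring.inverse_eq_inv', det_deflation hUV hα,
    det_deflation hUV one_ne_zero, _root_.one_zpow, one_mul, mul_inv]
  ring

end Deflation

theorem log_det_mul_inv_deflation {m k : Type*} [Fintype m] [Fintype k] [DecidableEq m]
    [DecidableEq k] {V : Matrix m k ℝ} {U : Matrix k m ℝ} {α : ℝ} {W : Matrix k k ℝ}
    {B : Matrix m m ℝ} (hUV : U * V = 1) (hα : α ≠ 0) (hW : W.det ≠ 0) (hB : B.det ≠ 0) :
    Real.log (B * (deflation V U α W)⁻¹).det =
      Real.log (B * (deflation V U 1 W)⁻¹).det -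
        (Fintype.card m - Fintype.card k) * Real.log α := by
  have det_ne_zero : (B * (deflation V U 1 W)⁻¹).det ≠ 0 := by
    rw [det_mul, det_nonsing_inv, Ring.inverse_eq_inv', det_deflation hUV one_ne_zero,
      _root_.one_zpow, one_mul]
    exact mul_ne_zero hB (inv_ne_zero hW)
  rw [det_mul_inv_deflation hUV hα, Real.log_div det_ne_zero (zpow_ne_zero _ hα), Real.log_zpow]
  push_cast
  rfl

section Equivalence

variable {m R : Type*} [Fintype m] [DecidableEq m] [CommRing R] {L N : Matrix m m R}

theorem inv_mul_mul_mul_mul_mul (hL : IsUnit L) (S B : Matrix m m R) :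
    (L * S * N)⁻¹ * (L * B * N) = N⁻¹ * (S⁻¹ * B) * N := by
  rw [Matrix.mul_inv_rev, Matrix.mul_inv_rev]
  simp only [Matrix.mul_assoc]
  rw [nonsing_inv_mul_cancel_left L _ ((isUnit_iff_isUnit_det L).mp hL)]

theorem trace_inv_mul_mul_mul_mul_mul (hL : IsUnit L) (hN : IsUnit N) (S B : Matrix m m R) :
    ((L * S * N)⁻¹ * (L * B * N)).trace = (B * S⁻¹).trace := by
  rw [inv_mul_mul_mul_mul_mul hL, trace_conj' hN, trace_mul_comm]

theorem det_inv_mul_mul_mul_mul_mul (hL : IsUnit L) (hN : IsUnit N) (S B : Matrix m m R) :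
    ((L * S * N)⁻¹ * (L * B * N)).det = (B * S⁻¹).det := by
  rw [inv_mul_mul_mul_mul_mul hL, det_conj' hN, det_mul_comm]

end Equivalence

theorem DLD_eq_neg_log_det_of_trace_eq {n : ℕ} {A P : Matrix (Fin n) (Fin n) ℝ}
    (h : (P⁻¹ * A).trace = n) : DLD A P = -Real.log (P⁻¹ * A).det := by
  rw [DLD, trace_mul_comm, h, det_mul_comm]
  ring

theorem log_Kap_of_trace_eq {n : ℕ} {M : Matrix (Fin n) (Fin n) ℝ} (h : M.trace = n) :
    Real.log (Kap M) = -Real.log M.det := by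
  have div_pow_eq_one : ((n : ℝ) / n) ^ n = 1 := by
    obtain rfl | hn := eq_or_ne n 0
    · exact pow_zero _
    · rw [div_self (Nat.cast_ne_zero.mpr hn), one_pow]
  rw [Kap, h, div_pow_eq_one, one_div, Real.log_inv]

theorem stmt_10_general {n r : ℕ} (hrn : r < n) {Q B : Matrix (Fin n) (Fin n) ℝ} (hQ : IsUnit Q)
    (hB : B.PosDef) {V : Matrix (Fin n) (Fin r) ℝ} (hV : Vᵀ * V = 1)
    {W : Matrix (Fin r) (Fin r) ℝ} (hBV : B * V = V * W)
    {A : Matrix (Fin n) (Fin n) ℝ} (hA : A = Q * B * Qᵀ)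
    {P : ℝ → Matrix (Fin n) (Fin n) ℝ} (hP : ∀ α, P α = Q * deflation V Vᵀ α W * Qᵀ)
    {αstar : ℝ} (hαstar : αstar = (B * (1 - V * Vᵀ)).trace / ((n : ℝ) - r)) :
    DLD A (P αstar) = Real.log (Kap ((P αstar)⁻¹ * A)) ∧
    DLD A (P αstar) = -Real.log ((P αstar)⁻¹ * A).det ∧
    DLD A (P αstar) = -Real.log ((P 1)⁻¹ * A).det + ((n : ℝ) - r) * Real.log αstar := by
  have hQT : IsUnit Qᵀ := (isUnit_transpose Q).mpr hQ
  have hW : IsUnit W.det := isUnit_det_of_mul_eq_mul hV hB.det_pos.ne'.isUnit hBV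
  have trace_pos : 0 < (B * (1 - V * Vᵀ)).trace :=
    trace_mul_one_sub_mul_conjTranspose_pos (by simpa using hrn) hB hV
  have codim_pos : 0 < (n : ℝ) - r := sub_pos.mpr (Nat.cast_lt.mpr hrn)
  have hα : αstar ≠ 0 := hαstar ▸ (div_pos trace_pos codim_pos).ne'
  have trace_eq : ((P αstar)⁻¹ * A).trace = n := by
    rw [hA, hP, trace_inv_mul_mul_mul_mul_mul hQ hQT, trace_mul_inv_deflation hV hα hW hBV,
      ← (eq_div_iff codim_pos.ne').mp hαstar, inv_mul_cancel_left₀ hα, Fintype.card_fin,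
      sub_add_cancel]
  have log_det_eq : Real.log ((P αstar)⁻¹ * A).det =
      Real.log ((P 1)⁻¹ * A).det - ((n : ℝ) - r) * Real.log αstar := by
    simpa only [hA, hP, det_inv_mul_mul_mul_mul_mul hQ hQT, Fintype.card_fin] using
      log_det_mul_inv_deflation hV hα hW.ne_zero hB.det_pos.ne'
  have DLD_eq := DLD_eq_neg_log_det_of_trace_eq trace_eq
  refine ⟨DLD_eq.trans (log_Kap_of_trace_eq trace_eq).symm, DLD_eq, ?_⟩
  rw [DLD_eq, log_det_eq]
  ring

/-- at the optimal scaling `α*`,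
`D_LD(A, P_{α*}) = ln K(P_{α*}⁻¹·A) = −ln det(P_{α*}⁻¹·A)
 = −ln det(P_1⁻¹·A) + (n−r)·ln α*`. -/
theorem stmt_10 (n r : ℕ) (hr : 1 ≤ r) (hrn : r < n)
    (Q E : Matrix (Fin n) (Fin n) ℝ) (hQ : IsUnit Q.det)
    (hEsymm : E.IsSymm) (hEpd : (1 + E).PosDef)
    (A : Matrix (Fin n) (Fin n) ℝ) (hA : A = Q * (1 + E) * Qᵀ)
    (V : Matrix (Fin n) (Fin r) ℝ) (hV : Vᵀ * V = 1)
    (d : Fin r → ℝ) (hVD : E * V = V * diagonal d)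
    (P : ℝ → Matrix (Fin n) (Fin n) ℝ)
    (hP : ∀ α : ℝ, P α = Q * (α • (1 - V * Vᵀ) + V * (1 + diagonal d) * Vᵀ) * Qᵀ)
    (αstar : ℝ) (hαstar : αstar = ((1 + E) * (1 - V * Vᵀ)).trace / ((n : ℝ) - r)) :
    DLD A (P αstar) = Real.log (Kap ((P αstar)⁻¹ * A)) ∧
    DLD A (P αstar) = - Real.log ((P αstar)⁻¹ * A).det ∧
    DLD A (P αstar) = - Real.log ((P 1)⁻¹ * A).det + ((n : ℝ) - r) * Real.log αstar := by
  have hBV : (1 + E) * V = V * (1 + diagonal d) := by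
    rw [Matrix.add_mul, Matrix.mul_add, hVD, Matrix.one_mul, Matrix.mul_one]
  exact stmt_10_general hrn ((isUnit_iff_isUnit_det Q).mpr hQ) hEpd hV hBV hA hP hαstar
end

section
/- Let 1 ≤ r < n, let Q be an invertible n×n real matrix, and let Ẽ be an n×n real symmetric matrix with I + Ẽ positive definite whose eigendecomposition is Ẽ = V·D·Vᵀ + W·Θ·Wᵀ, where the n×n matrix [V | W] is orthogonal, V is n×r, W is n×(n−r), and D and Θ are diagonal. Set A = Q·(I+Ẽ)·Qᵀ, and for α > 0 set P_α = Q·( α·(I − V·Vᵀ) + V·(I_r + D)·Vᵀ )·Qᵀ and M_α = S_α⁻¹·A·S_α⁻¹ where S_α is the positive definite square root of P_α. Let λ₁ = max_i (1 + Θ_{ii}) and λ_n = min_i (1 + Θ_{ii}). Then κ₂(M_α) ≥ λ₁/λ_n for every α > 0, and κ₂(M_α) = λ₁/λ_n whenever λ_n ≤ α ≤ λ₁; hence every α in the interval [λ_n, λ₁] minimises the function α ↦ κ₂(M_α) over α > 0. -/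
open Matrix

/-- The spectral condition number: ratio of the largest to the smallest eigenvalue
(for a real symmetric positive definite matrix, the spectrum is the set of its
eigenvalues). -/
noncomputable def kappa2 {n : ℕ} (M : Matrix (Fin n) (Fin n) ℝ) : ℝ :=
  sSup (spectrum ℝ M) / sInf (spectrum ℝ M)

/-!
Put `U = [V | W]`, `X = diag(1 + D, α)` and `Y = diag(1, (1 + Θ) / α)`, so that
`P_α = Q U X Uᵀ Qᵀ` and `A = Q U X Y Uᵀ Qᵀ`. Since `S S = P_α`, the matrix `T = S (Qᵀ)⁻¹ U`
satisfies `S⁻¹ A S⁻¹ = T Y T⁻¹`. Hence the eigenvalues of `M_α` are `1` and the `(1 + Θᵢᵢ) / α`, and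
`κ₂(M_α) = max(1, λ₁/α) / min(1, λₙ/α)`, from which everything follows.
-/

section Similarity

variable {m ι R : Type*} [Fintype m] [DecidableEq m] [Fintype ι] [DecidableEq ι] [CommRing R]

lemma spectrum_mul_mul_of_mul_eq_one {T : Matrix m ι R} {T' : Matrix ι m R}
    (hTT' : T * T' = 1) (hT'T : T' * T = 1) (Y : Matrix ι ι R) :
    spectrum R (T * Y * T') = spectrum R Y := by
  ext μ
  have hconj : algebraMap R _ μ - T * Y * T' = T * (algebraMap R _ μ - Y) * T' := by
    simp only [Algebra.algebraMap_eq_smul_one, Matrix.mul_sub, Matrix.sub_mul, Matrix.mul_smul,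
      Matrix.smul_mul, Matrix.mul_one, hTT']
  rw [spectrum.mem_iff, spectrum.mem_iff, hconj, isUnit_iff_isUnit_det, isUnit_iff_isUnit_det,
    det_conj_of_mul_eq_one hTT' hT'T]

lemma spectrum_inv_mul_mul_inv {S₁ S₂ : Matrix m m R} {L N' : Matrix m ι R} {N : Matrix ι m R}
    {X : Matrix ι ι R} (hS₁ : IsUnit S₁.det) (hS₂ : IsUnit S₂.det) (hNN' : N * N' = 1)
    (hN'N : N' * N = 1) (hS : S₁ * S₂ = L * X * N) (Y : Matrix ι ι R) :
    spectrum R (S₁⁻¹ * (L * X * Y * N) * S₂⁻¹) = spectrum R Y := by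
  have hLX : L * X = S₁ * (S₂ * N') := by
    rw [← Matrix.mul_assoc, hS, Matrix.mul_assoc, hNN', Matrix.mul_one]
  have hsimilar : S₁⁻¹ * (L * X * Y * N) * S₂⁻¹ = S₂ * N' * Y * (N * S₂⁻¹) := by
    simp only [hLX, Matrix.mul_assoc, nonsing_inv_mul_cancel_left _ _ hS₁]
  rw [hsimilar]
  apply spectrum_mul_mul_of_mul_eq_one
  · rw [Matrix.mul_assoc, ← Matrix.mul_assoc N', hN'N, Matrix.one_mul, mul_nonsing_inv _ hS₂]
  · rw [Matrix.mul_assoc, nonsing_inv_mul_cancel_left _ _ hS₂, hNN']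

end Similarity

section Diagonalization

variable {m ι : Type*} [Fintype m] [Fintype ι] [DecidableEq ι]

lemma pos_of_posDef_mul_diagonal_mul_conjTranspose {R : Type*} [Ring R] [Nontrivial R]
    [NoZeroDivisors R] [PartialOrder R] [StarRing R] [StarOrderedRing R] {U : Matrix m ι R}
    (hU : Uᴴ * U = 1) {c : ι → R} (hc : (U * diagonal c * Uᴴ).PosDef) (i : ι) : 0 < c i := by
  have hinj : Function.Injective U.mulVec :=
    Function.LeftInverse.injective (g := Uᴴ.mulVec) fun x => by rw [mulVec_mulVec, hU, one_mulVec]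
  have hdiag : Uᴴ * (U * diagonal c * Uᴴ) * U = diagonal c := by
    rw [Matrix.mul_assoc U, ← Matrix.mul_assoc, hU, Matrix.one_mul, Matrix.mul_assoc, hU,
      Matrix.mul_one]
  exact posDef_diagonal_iff.mp (hdiag ▸ hc.conjTranspose_mul_mul_same hinj) i

lemma spectrum_inv_mul_congruence_mul_inv [DecidableEq m] {K : Type*} [Field K]
    {U : Matrix m ι K} {Q S₁ S₂ : Matrix m m K} (hU : Uᵀ * U = 1) (hUt : U * Uᵀ = 1)
    (hQ : IsUnit Q.det) (hS₁ : IsUnit S₁.det) (hS₂ : IsUnit S₂.det) {x : ι → K}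
    (hS : S₁ * S₂ = Q * (U * diagonal x * Uᵀ) * Qᵀ) (y : ι → K) :
    spectrum K (S₁⁻¹ * (Q * (U * diagonal (x * y) * Uᵀ) * Qᵀ) * S₂⁻¹) = Set.range y := by
  have hQt : IsUnit Qᵀ.det := by rwa [det_transpose]
  have hA : Q * (U * diagonal (x * y) * Uᵀ) * Qᵀ =
      Q * U * diagonal x * diagonal y * (Uᵀ * Qᵀ) := by
    simp only [Pi.mul_def, ← diagonal_mul_diagonal, Matrix.mul_assoc]
  have hP : S₁ * S₂ = Q * U * diagonal x * (Uᵀ * Qᵀ) := by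
    simp only [hS, Matrix.mul_assoc]
  have hNN' : Uᵀ * Qᵀ * (Qᵀ⁻¹ * U) = 1 := by
    rw [Matrix.mul_assoc, mul_nonsing_inv_cancel_left _ _ hQt, hU]
  have hN'N : Qᵀ⁻¹ * U * (Uᵀ * Qᵀ) = 1 := by
    rw [Matrix.mul_assoc, ← Matrix.mul_assoc U, hUt, Matrix.one_mul, nonsing_inv_mul _ hQt]
  rw [hA, spectrum_inv_mul_mul_inv hS₁ hS₂ hNN' hN'N hP, spectrum_diagonal]

end Diagonalization

lemma transpose_fromCols_mul_fromCols_eq_one {m p q R : Type*} [Fintype m] [DecidableEq p]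
    [DecidableEq q] [CommSemiring R] {V : Matrix m p R} {W : Matrix m q R}
    (hV : Vᵀ * V = 1) (hW : Wᵀ * W = 1) (hVW : Vᵀ * W = 0) :
    (fromCols V W)ᵀ * fromCols V W = 1 := by
  have hWV : Wᵀ * V = 0 := by simpa using congrArg transpose hVW
  rw [transpose_fromCols, fromRows_mul_fromCols, hV, hW, hVW, hWV, fromBlocks_one]

lemma diagonal_one_add {ι R : Type*} [DecidableEq ι] [AddMonoidWithOne R] (d : ι → R) :
    diagonal (1 + d) = 1 + diagonal d := by
  rw [← diagonal_one, diagonal_add]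
  rfl

section ColumnBlocks

variable {m p q R : Type*} [Fintype p] [DecidableEq p] [Fintype q] [DecidableEq q]

lemma fromCols_mul_diagonal_mul_transpose [Semiring R] (V : Matrix m p R) (W : Matrix m q R)
    (a : p → R) (b : q → R) :
    fromCols V W * diagonal (Sum.elim a b) * (fromCols V W)ᵀ =
      V * diagonal a * Vᵀ + W * diagonal b * Wᵀ := by
  rw [← fromBlocks_diagonal, fromCols_mul_fromBlocks, transpose_fromCols, fromCols_mul_fromRows]
  simp only [Matrix.mul_zero, add_zero, zero_add]

lemma one_add_eq_fromCols_mul_diagonal_mul_transpose [DecidableEq m] [Semiring R]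
    {V : Matrix m p R} {W : Matrix m q R} (hVW : V * Vᵀ + W * Wᵀ = 1) (d : p → R) (t : q → R) :
    1 + (V * diagonal d * Vᵀ + W * diagonal t * Wᵀ) =
      fromCols V W * diagonal (Sum.elim (1 + d) (1 + t)) * (fromCols V W)ᵀ := by
  rw [fromCols_mul_diagonal_mul_transpose, ← hVW, diagonal_one_add, diagonal_one_add]
  simp only [Matrix.mul_add, Matrix.add_mul, Matrix.mul_one]
  abel

lemma smul_one_sub_add_eq_fromCols_mul_diagonal_mul_transpose [DecidableEq m] [CommRing R]
    {V : Matrix m p R} {W : Matrix m q R} (hVW : V * Vᵀ + W * Wᵀ = 1) (d : p → R) (α : R) :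
    α • (1 - V * Vᵀ) + V * (1 + diagonal d) * Vᵀ =
      fromCols V W * diagonal (Sum.elim (1 + d) (Function.const q α)) * (fromCols V W)ᵀ := by
  have hW : 1 - V * Vᵀ = W * Wᵀ := sub_eq_of_eq_add' hVW.symm
  have hα : diagonal (Function.const q α) = α • (1 : Matrix q q R) := (smul_one_eq_diagonal α).symm
  rw [fromCols_mul_diagonal_mul_transpose, hW, hα, diagonal_one_add, Matrix.mul_smul,
    Matrix.smul_mul, Matrix.mul_one, add_comm]

end ColumnBlocks

lemma spectrum_preconditioned_eq_insert_one {m p q K : Type*} [Fintype m] [DecidableEq m]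
    [Fintype p] [DecidableEq p] [Nonempty p] [Fintype q] [DecidableEq q] [Field K]
    {V : Matrix m p K} {W : Matrix m q K} (hU : (fromCols V W)ᵀ * fromCols V W = 1)
    (hVW : V * Vᵀ + W * Wᵀ = 1) {Q S₁ S₂ : Matrix m m K} (hQ : IsUnit Q.det)
    (hS₁ : IsUnit S₁.det) (hS₂ : IsUnit S₂.det) {α : K} (hα : α ≠ 0) {d : p → K}
    (hS : S₁ * S₂ = Q * (α • (1 - V * Vᵀ) + V * (1 + diagonal d) * Vᵀ) * Qᵀ) (t : q → K) :
    spectrum K (S₁⁻¹ * (Q * (1 + (V * diagonal d * Vᵀ + W * diagonal t * Wᵀ)) * Qᵀ) * S₂⁻¹) =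
      insert 1 ((· / α) '' Set.range (1 + t)) := by
  have hUt : fromCols V W * (fromCols V W)ᵀ = 1 := by
    rw [transpose_fromCols, fromCols_mul_fromRows, hVW]
  have hfactor : Sum.elim (1 + d) (1 + t) =
      Sum.elim (1 + d) (Function.const q α) * Sum.elim (1 : p → K) ((· / α) ∘ (1 + t)) := by
    ext (i | j)
    · simp
    · simp [mul_div_cancel₀ _ hα]
  rw [smul_one_sub_add_eq_fromCols_mul_diagonal_mul_transpose hVW] at hS
  rw [one_add_eq_fromCols_mul_diagonal_mul_transpose hVW, hfactor,
    spectrum_inv_mul_congruence_mul_inv hU hUt hQ hS₁ hS₂ hS, Set.Sum.elim_range, Set.range_comp,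
    Set.range_one, Set.singleton_union]

lemma kappa2_eq_of_spectrum_eq_insert_one {n : ℕ} {M : Matrix (Fin n) (Fin n) ℝ} {s : Set ℝ}
    {α a b : ℝ} (hα : 0 < α) (hM : spectrum ℝ M = insert 1 ((· / α) '' s))
    (ha : IsGreatest s a) (hb : IsLeast s b) :
    kappa2 M = max 1 (a / α) / min 1 (b / α) := by
  have hmono : Monotone (· / α) := fun _ _ h => div_le_div_of_nonneg_right h hα.le
  rw [kappa2, hM, ((hmono.map_isGreatest ha).insert 1).csSup_eq,
    ((hmono.map_isLeast hb).insert 1).csInf_eq]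

section OrderedField

variable {K : Type*} [Field K] [LinearOrder K] [IsStrictOrderedRing K] {a b α : K}

lemma div_le_max_one_div_min_one (hα : 0 < α) (hb : 0 < b) :
    a / b ≤ max 1 (a / α) / min 1 (b / α) :=
  calc a / b = a / α / (b / α) := (div_div_div_cancel_right₀ hα.ne' a b).symm
    _ ≤ max 1 (a / α) / min 1 (b / α) :=
      div_le_div₀ (zero_le_one.trans (le_max_left _ _)) (le_max_right _ _)
        (lt_min one_pos (div_pos hb hα)) (min_le_right _ _)

lemma max_one_div_min_one_eq_div (hα : 0 < α) (hb : b ≤ α) (ha : α ≤ a) :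
    max 1 (a / α) / min 1 (b / α) = a / b := by
  rw [max_eq_right ((one_le_div hα).2 ha), min_eq_right ((div_le_one hα).2 hb),
    div_div_div_cancel_right₀ hα.ne']

end OrderedField

/-- `κ₂(M_α) ≥ λ₁/λ_n` for all `α > 0`, with equality whenever
`λ_n ≤ α ≤ λ₁`; hence every `α ∈ [λ_n, λ₁]` minimises `α ↦ κ₂(M_α)` over `α > 0`. -/
theorem stmt_13 (n r : ℕ) (hr : 1 ≤ r) (hrn : r < n)
    (Q E : Matrix (Fin n) (Fin n) ℝ) (hQ : IsUnit Q.det) (hEsymm : E.IsSymm)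
    (hEpd : (1 + E).PosDef)
    (V : Matrix (Fin n) (Fin r) ℝ) (W : Matrix (Fin n) (Fin (n - r)) ℝ)
    (hV : Vᵀ * V = 1) (hW : Wᵀ * W = 1) (hVW : Vᵀ * W = 0)
    (hcomplete : V * Vᵀ + W * Wᵀ = 1)
    (d : Fin r → ℝ) (t : Fin (n - r) → ℝ)
    (hE : E = V * diagonal d * Vᵀ + W * diagonal t * Wᵀ)
    (A : Matrix (Fin n) (Fin n) ℝ) (hA : A = Q * (1 + E) * Qᵀ)
    (P : ℝ → Matrix (Fin n) (Fin n) ℝ)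
    (hP : ∀ α : ℝ, P α = Q * (α • (1 - V * Vᵀ) + V * (1 + diagonal d) * Vᵀ) * Qᵀ)
    (S : ℝ → Matrix (Fin n) (Fin n) ℝ)
    (hS : ∀ α : ℝ, 0 < α → (S α).PosDef ∧ S α * S α = P α)
    (M : ℝ → Matrix (Fin n) (Fin n) ℝ)
    (hM : ∀ α : ℝ, M α = (S α)⁻¹ * A * (S α)⁻¹)
    (l1 ln : ℝ)
    (hl1 : IsGreatest {x : ℝ | ∃ i, x = 1 + t i} l1)
    (hln : IsLeast {x : ℝ | ∃ i, x = 1 + t i} ln) :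
    (∀ α : ℝ, 0 < α → l1 / ln ≤ kappa2 (M α)) ∧
    (∀ α : ℝ, ln ≤ α → α ≤ l1 → kappa2 (M α) = l1 / ln) ∧
    (∀ α ∈ Set.Icc ln l1, ∀ β : ℝ, 0 < β → kappa2 (M α) ≤ kappa2 (M β)) := by
  have : Nonempty (Fin r) := ⟨⟨0, hr⟩⟩
  have hU := transpose_fromCols_mul_fromCols_eq_one hV hW hVW
  have hrange : {x : ℝ | ∃ i, x = 1 + t i} = Set.range (1 + t) := by
    simp only [Set.range, Pi.add_apply, Pi.one_apply, eq_comm]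
  rw [hrange] at hl1 hln
  have hln_pos : 0 < ln := by
    obtain ⟨j, rfl⟩ := hln.1
    rw [hE, one_add_eq_fromCols_mul_diagonal_mul_transpose hcomplete] at hEpd
    exact pos_of_posDef_mul_diagonal_mul_conjTranspose hU hEpd (Sum.inr j)
  have hkappa : ∀ α, 0 < α → kappa2 (M α) = max 1 (l1 / α) / min 1 (ln / α) := by
    intro α hα
    obtain ⟨hSpos, hSS⟩ := hS α hα
    have hSdet : IsUnit (S α).det := hSpos.det_pos.ne'.isUnit
    rw [hM, hA, hE]
    exact kappa2_eq_of_spectrum_eq_insert_one hα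
      (spectrum_preconditioned_eq_insert_one hU hcomplete hQ hSdet hSdet hα.ne'
        (hSS.trans (hP α)) t) hl1 hln
  have hbound : ∀ α, 0 < α → l1 / ln ≤ kappa2 (M α) := fun α hα =>
    (div_le_max_one_div_min_one hα hln_pos).trans_eq (hkappa α hα).symm
  have hattained : ∀ α, ln ≤ α → α ≤ l1 → kappa2 (M α) = l1 / ln := fun α hln_le hle_l1 =>
    have hα := hln_pos.trans_le hln_le
    (hkappa α hα).trans (max_one_div_min_one_eq_div hα hln_le hle_l1)
  exact ⟨hbound, hattained, fun α hα β hβ => (hattained α hα.1 hα.2).trans_le (hbound β hβ)⟩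
end

section
/- Let n ≥ 1, let A be an n×n real symmetric positive definite matrix, and let C be a set of n×n real symmetric positive definite matrices that is a cone, i.e. c·P ∈ C whenever P ∈ C and c > 0. If P* ∈ C satisfies D_LD(A,P*) ≤ D_LD(A,P) for all P ∈ C, then P* also satisfies ln K((P*)⁻¹·A) ≤ ln K(P⁻¹·A) for all P ∈ C; that is, every minimiser of the Bregman divergence over C is a minimiser of Kaporin's condition number over C. -/
open Matrix

/-!
Along the ray `{c • P | 0 < c}` the divergence from `A` is
`c⁻¹ * tr (A * P⁻¹) + n * log c - log det (A * P⁻¹) - n`, whose minimum over `c` is attained at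
`c = tr (A * P⁻¹) / n` and equals `log K(P⁻¹ * A)`. Since `C` is a union of such rays, minimising
the divergence over `C` amounts to minimising `log K`.
-/

open scoped ComplexOrder MatrixOrder Matrix.Norms.L2Operator in
theorem trace_mul_pos_of_posDef {m 𝕜 : Type*} [Fintype m] [Nonempty m] [RCLike 𝕜]
    {A B : Matrix m m 𝕜} (hA : A.PosDef) (hB : B.PosDef) : 0 < (A * B).trace := by
  classical
  obtain ⟨U, hU, rfl⟩ :=
    CStarAlgebra.isStrictlyPositive_iff_eq_star_mul_self.mp hA.isStrictlyPositive
  have hconj : (U * B * star U).PosDef := hU.posDef_star_right_conjugate_iff.mpr hB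
  calc 0 < (U * B * star U).trace := hconj.trace_pos
    _ = (star U * U * B).trace := by rw [trace_mul_comm, Matrix.mul_assoc]

section

variable {n : ℕ} {A P M : Matrix (Fin n) (Fin n) ℝ}

theorem Kap_mul_comm (M N : Matrix (Fin n) (Fin n) ℝ) : Kap (M * N) = Kap (N * M) := by
  rw [Kap, Kap, trace_mul_comm, det_mul_comm]

theorem natCast_dim_pos_of_trace_ne_zero (htrace : M.trace ≠ 0) : (0 : ℝ) < n := by
  rcases n.eq_zero_or_pos with rfl | hn
  · exact absurd (trace_fin_zero M) htrace
  · exact_mod_cast hn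

theorem log_Kap (htrace : M.trace ≠ 0) (hdet : M.det ≠ 0) :
    Real.log (Kap M) = n * Real.log (M.trace / n) - Real.log M.det := by
  have hn := natCast_dim_pos_of_trace_ne_zero htrace
  rw [Kap, Real.log_div (pow_ne_zero n (div_ne_zero htrace hn.ne')) hdet, Real.log_pow]

theorem log_Kap_le_DLD (htrace : 0 < (A * P⁻¹).trace) (hdet : (A * P⁻¹).det ≠ 0) :
    Real.log (Kap (A * P⁻¹)) ≤ DLD A P := by
  have hn := natCast_dim_pos_of_trace_ne_zero htrace.ne'
  calc Real.log (Kap (A * P⁻¹))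
      = n * Real.log ((A * P⁻¹).trace / n) - Real.log (A * P⁻¹).det := log_Kap htrace.ne' hdet
    _ ≤ n * ((A * P⁻¹).trace / n - 1) - Real.log (A * P⁻¹).det := by
      gcongr
      exact Real.log_le_sub_one_of_pos (div_pos htrace hn)
    _ = DLD A P := by
      rw [DLD]
      field_simp
      ring

theorem DLD_smul {c : ℝ} (hc : c ≠ 0) (hdet : (A * P⁻¹).det ≠ 0) :
    DLD A (c • P) =
      c⁻¹ * (A * P⁻¹).trace + n * Real.log c - Real.log (A * P⁻¹).det - n := by
  have hP : IsUnit P.det := by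
    rw [det_mul] at hdet
    exact isUnit_nonsing_inv_det_iff.mp (right_ne_zero_of_mul hdet).isUnit
  have hinv : A * (c • P)⁻¹ = c⁻¹ • (A * P⁻¹) := by
    rw [← Matrix.mul_smul]
    exact congrArg (A * ·) (inv_smul' P (Units.mk0 c hc) hP)
  rw [DLD, hinv, trace_smul, smul_eq_mul, det_smul, Fintype.card_fin,
    Real.log_mul (pow_ne_zero n (inv_ne_zero hc)) hdet, Real.log_pow, Real.log_inv]
  ring

theorem DLD_trace_div_smul (htrace : (A * P⁻¹).trace ≠ 0) (hdet : (A * P⁻¹).det ≠ 0) :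
    DLD A (((A * P⁻¹).trace / n) • P) = Real.log (Kap (A * P⁻¹)) := by
  have hn := natCast_dim_pos_of_trace_ne_zero htrace
  rw [DLD_smul (div_ne_zero htrace hn.ne') hdet, log_Kap htrace hdet, inv_div,
    div_mul_cancel₀ _ htrace]
  ring

theorem stmt_15_general {C : Set (Matrix (Fin n) (Fin n) ℝ)}
    (htrace : ∀ P ∈ C, 0 < (A * P⁻¹).trace) (hdet : ∀ P ∈ C, 0 < (A * P⁻¹).det)
    (hCcone : ∀ P ∈ C, ∀ c : ℝ, 0 < c → c • P ∈ C)
    {Pstar : Matrix (Fin n) (Fin n) ℝ} (hPstar : Pstar ∈ C)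
    (hmin : ∀ P ∈ C, DLD A Pstar ≤ DLD A P) :
    ∀ P ∈ C, Real.log (Kap (Pstar⁻¹ * A)) ≤ Real.log (Kap (P⁻¹ * A)) := by
  intro P hP
  have hscale : 0 < (A * P⁻¹).trace / n :=
    div_pos (htrace P hP) (natCast_dim_pos_of_trace_ne_zero (htrace P hP).ne')
  rw [Kap_mul_comm Pstar⁻¹, Kap_mul_comm P⁻¹]
  calc Real.log (Kap (A * Pstar⁻¹))
      ≤ DLD A Pstar := log_Kap_le_DLD (htrace Pstar hPstar) (hdet Pstar hPstar).ne'
    _ ≤ DLD A (((A * P⁻¹).trace / n) • P) := hmin _ (hCcone P hP _ hscale)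
    _ = Real.log (Kap (A * P⁻¹)) := DLD_trace_div_smul (htrace P hP).ne' (hdet P hP).ne'

end

/-- every minimiser of the Bregman divergence over a cone of
symmetric positive definite matrices also minimises Kaporin's condition number. -/
theorem stmt_15 (n : ℕ) (hn : 1 ≤ n) (A : Matrix (Fin n) (Fin n) ℝ) (hA : A.PosDef)
    (C : Set (Matrix (Fin n) (Fin n) ℝ))
    (hCpd : ∀ P ∈ C, P.PosDef)
    (hCcone : ∀ P ∈ C, ∀ c : ℝ, 0 < c → c • P ∈ C)
    (Pstar : Matrix (Fin n) (Fin n) ℝ) (hPstar : Pstar ∈ C)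
    (hmin : ∀ P ∈ C, DLD A Pstar ≤ DLD A P) :
    ∀ P ∈ C, Real.log (Kap (Pstar⁻¹ * A)) ≤ Real.log (Kap (P⁻¹ * A)) := by
  have : Nonempty (Fin n) := ⟨⟨0, hn⟩⟩
  exact stmt_15_general (fun P hP ↦ trace_mul_pos_of_posDef hA (hCpd P hP).inv)
    (fun P hP ↦ det_mul A P⁻¹ ▸ mul_pos hA.det_pos (hCpd P hP).inv.det_pos) hCcone hPstar hmin
end

section
/- Let n ≥ 1, let A and P be n×n real symmetric positive definite matrices, and set c = trace(P⁻¹·A)/n. Then D_LD(A, c·P) = ln K((c·P)⁻¹·A) = ln K(P⁻¹·A). -/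
open Matrix

section PosDef

open scoped ComplexOrder MatrixOrder

variable {ι 𝕜 : Type*} [Fintype ι] [RCLike 𝕜] {M N : Matrix ι ι 𝕜}

-- With `M = Bᴴ * B`, cyclicity of the trace reduces the claim to the congruent matrix `B * N * Bᴴ`.
theorem trace_mul_pos_of_posDef_s19 [Nonempty ι] (hM : M.PosDef) (hN : N.PosDef) :
    0 < (M * N).trace := by
  classical
  obtain ⟨B, hB, hMB⟩ :=
    CStarAlgebra.isStrictlyPositive_iff_eq_star_mul_self.mp hM.isStrictlyPositive
  have hcongr : (B * N * Bᴴ).PosDef :=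
    hN.mul_mul_conjTranspose_same (vecMul_injective_of_isUnit hB)
  calc 0 < (B * N * Bᴴ).trace := hcongr.trace_pos
    _ = (Bᴴ * B * N).trace := trace_mul_cycle B N Bᴴ
    _ = (M * N).trace := by rw [hMB, star_eq_conjTranspose]

theorem det_mul_pos_of_posDef [DecidableEq ι] (hM : M.PosDef) (hN : N.PosDef) :
    0 < (M * N).det := by
  rw [det_mul]
  exact mul_pos hM.det_pos hN.det_pos

end PosDef

theorem smul_inv_mul {ι K : Type*} [Fintype ι] [DecidableEq ι] [Field K] {c : K} (hc : c ≠ 0)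
    {P : Matrix ι ι K} (hP : IsUnit P.det) (A : Matrix ι ι K) :
    (c • P)⁻¹ * A = c⁻¹ • (P⁻¹ * A) := by
  let := invertibleOfNonzero hc
  rw [inv_smul P c hP, invOf_eq_inv, smul_mul]

section Kaporin

variable {n : ℕ}

theorem Kap_smul {c : ℝ} (hc : c ≠ 0) (M : Matrix (Fin n) (Fin n) ℝ) :
    Kap (c • M) = Kap M := by
  rw [Kap, Kap, trace_smul, det_smul, Fintype.card_fin, smul_eq_mul, mul_div_assoc, mul_pow,
    mul_div_mul_left _ _ (pow_ne_zero n hc)]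

theorem Kap_eq_inv_det_of_trace_eq {M : Matrix (Fin n) (Fin n) ℝ} (hM : M.trace = n) :
    Kap M = M.det⁻¹ := by
  have hpow : ((n : ℝ) / n) ^ n = 1 := by
    rcases eq_or_ne n 0 with rfl | hn
    · exact pow_zero _
    · rw [div_self (Nat.cast_ne_zero.mpr hn), one_pow]
  rw [Kap, hM, hpow, one_div]

theorem DLD_eq_log_Kap_of_trace_eq {A P : Matrix (Fin n) (Fin n) ℝ}
    (h : (P⁻¹ * A).trace = n) : DLD A P = Real.log (Kap (P⁻¹ * A)) := by
  rw [DLD, trace_mul_comm, det_mul_comm, h, Kap_eq_inv_det_of_trace_eq h, Real.log_inv]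
  ring

end Kaporin

theorem stmt_19_general (n : ℕ) (A P : Matrix (Fin n) (Fin n) ℝ)
    (htrace : 0 < (P⁻¹ * A).trace) (hdet : 0 < (P⁻¹ * A).det)
    (c : ℝ) (hc : c = (P⁻¹ * A).trace / n) :
    DLD A (c • P) = Real.log (Kap ((c • P)⁻¹ * A)) ∧
    Real.log (Kap ((c • P)⁻¹ * A)) = Real.log (Kap (P⁻¹ * A)) := by
  have hn : (n : ℝ) ≠ 0 := by
    intro h
    obtain rfl := Nat.cast_eq_zero.mp h
    exact htrace.ne' (trace_fin_zero _)
  have hc0 : c ≠ 0 := hc ▸ div_ne_zero htrace.ne' hn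
  have hP : IsUnit P.det := by
    rw [det_mul] at hdet
    exact isUnit_nonsing_inv_det_iff.mp (left_ne_zero_of_mul hdet.ne').isUnit
  have hscale : (c • P)⁻¹ * A = c⁻¹ • (P⁻¹ * A) := smul_inv_mul hc0 hP A
  have hnormalized : ((c • P)⁻¹ * A).trace = n := by
    rw [hscale, trace_smul, smul_eq_mul, hc, inv_div, div_mul_cancel₀ _ htrace.ne']
  refine ⟨DLD_eq_log_Kap_of_trace_eq hnormalized, ?_⟩
  rw [hscale, Kap_smul (inv_ne_zero hc0)]

/-- with `c = trace(P⁻¹·A)/n`,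
`D_LD(A, c·P) = ln K((c·P)⁻¹·A) = ln K(P⁻¹·A)`. -/
theorem stmt_19 (n : ℕ) (hn : 1 ≤ n) (A P : Matrix (Fin n) (Fin n) ℝ)
    (hA : A.PosDef) (hP : P.PosDef)
    (c : ℝ) (hc : c = (P⁻¹ * A).trace / n) :
    DLD A (c • P) = Real.log (Kap ((c • P)⁻¹ * A)) ∧
    Real.log (Kap ((c • P)⁻¹ * A)) = Real.log (Kap (P⁻¹ * A)) := by
  have : Nonempty (Fin n) := Fin.pos_iff_nonempty.mp hn
  exact stmt_19_general n A P (trace_mul_pos_of_posDef_s19 hP.inv hA)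
    (det_mul_pos_of_posDef hP.inv hA) c hc
end
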